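/- arXiv:1910.05604 — 2 statements merged into one kernel-verified Lean document; each statement's English description precedes it below -/
import Mathlib

section
/- Let M : ℝ² → ℝ be smooth with all partial derivatives up to order 9 square-integrable on ℝ², and let Ω := {x=(x₁,x₂,x₃)∈ℝ³ : x₁ > M(x₂,x₃)}. For every α > 0 there exists a constant C > 0 (depending only on α and M) such that for every continuously differentiable function f : closure(Ω) → ℝ one has ∫_Ω e^{-αx₁} |f(x)|² dx ≤ C ( ∫_Ω |∇f(x)|² dx + ∫_{ℝ²} |f(M(x'),x')|² dx' ), the inequality being understood in [0,∞]. -/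
/- STATEMENT 2: Hardy-type inequality on the perturbed half-space
Ω = {x ∈ ℝ³ : x₁ > M(x₂,x₃)}. -/

noncomputable section

open MeasureTheory Real Set Filter
open scoped ENNReal

abbrev E3 : Type := EuclideanSpace ℝ (Fin 3)
abbrev E2 : Type := EuclideanSpace ℝ (Fin 2)

/-- Projection on the tangential variables `x' = (x₂, x₃)`. -/
def proj2 (x : E3) : E2 := (WithLp.equiv 2 (Fin 2 → ℝ)).symm ![x 1, x 2]

/-- The perturbed half-space `Ω = {x : x₁ > M(x₂,x₃)}`. -/
def Omg (M : E2 → ℝ) : Set E3 := {x : E3 | M (proj2 x) < x 0}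

/-- The boundary point `(M(x'), x')` of `∂Ω` over `x' ∈ ℝ²`. -/
def gph (M : E2 → ℝ) (x' : E2) : E3 := (WithLp.equiv 2 (Fin 3 → ℝ)).symm ![M x', x' 0, x' 1]


lemma ray_sq_bound {g : ℝ → ℝ} {m t : ℝ} (hmt : m < t) (hg : ContinuousOn g (Icc m t))
    (hd : ∀ s ∈ Ioo m t, DifferentiableAt ℝ g s)
    (hI : IntegrableOn (fun s => deriv g s ^ 2) (Ioi m)) :
    g t ^ 2 ≤ 2 * g m ^ 2 + 2 * (t - m) * ∫ s in Ioi m, deriv g s ^ 2 := by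
  set A := ∫ s in Ioi m, deriv g s ^ 2 with hA
  have hI2 : IntegrableOn (fun s => deriv g s ^ 2) (Ioc m t) := hI.mono_set Ioc_subset_Ioi_self
  have hconst : ∀ c : ℝ, IntegrableOn (fun _ : ℝ => c) (Ioc m t) := fun c =>
    integrableOn_const (by simp)
  have hI1 : IntegrableOn (deriv g) (Ioc m t) := by
    refine Integrable.mono' ((hconst 1).add hI2) (measurable_deriv g).aestronglyMeasurable ?_
    refine Eventually.of_forall fun s => ?_
    simp only [Pi.add_apply, Real.norm_eq_abs]
    nlinarith [sq_abs (deriv g s), sq_nonneg (|deriv g s| - 1), abs_nonneg (deriv g s)]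
  have hftc : ∫ s in Ioc m t, deriv g s = g t - g m := by
    rw [← intervalIntegral.integral_of_le hmt.le]
    apply intervalIntegral.integral_eq_sub_of_hasDerivAt_of_le hmt.le hg
    · intro x hx
      exact (hd x hx).hasDerivAt
    · rwa [intervalIntegrable_iff_integrableOn_Ioc_of_le hmt.le]
  have hle : ∫ s in Ioc m t, deriv g s ^ 2 ≤ A :=
    setIntegral_mono_set hI (Eventually.of_forall fun s => sq_nonneg _)
      (Ioc_subset_Ioi_self.eventuallyLE)
  set D := g t - g m with hD
  have key : ∀ c : ℝ, 2 * c * D ≤ c ^ 2 * (t - m) + A := by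
    intro c
    have h1 : ∫ s in Ioc m t, 2 * c * deriv g s ≤ ∫ s in Ioc m t, (c ^ 2 + deriv g s ^ 2) := by
      apply integral_mono (hI1.const_mul _) ((hconst _).add hI2)
      intro s
      change 2 * c * deriv g s ≤ c ^ 2 + deriv g s ^ 2
      nlinarith [sq_nonneg (c - deriv g s)]
    rw [integral_const_mul, hftc, integral_add (hconst _) hI2] at h1
    simp [hmt.le] at h1
    nlinarith
  have hL : 0 < t - m := sub_pos.2 hmt
  have h2 := key (D / (t - m))
  have h3 : D ^ 2 ≤ (t - m) * A := by
    have e1 : 2 * (D / (t - m)) * D = 2 * (D ^ 2 / (t - m)) := by ring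
    have e2 : (D / (t - m)) ^ 2 * (t - m) = D ^ 2 / (t - m) := by field_simp
    rw [e1, e2] at h2
    have h4 : D ^ 2 / (t - m) ≤ A := by linarith
    rw [div_le_iff₀ hL] at h4
    linarith
  have : g t = D + g m := by simp [hD]
  rw [this]
  nlinarith [sq_nonneg (D - g m)]

lemma hardy_ray {g : ℝ → ℝ} {m α : ℝ} (hα : 0 < α) (hg : ContinuousOn g (Ici m))
    (hd : ∀ s ∈ Ioi m, DifferentiableAt ℝ g s) :
    ∫⁻ t in Ioi m, ENNReal.ofReal (Real.exp (-α * t) * g t ^ 2) ≤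
      ENNReal.ofReal (4 / α * (1 + 2 / α) * Real.exp (-α * m)) *
        ((∫⁻ t in Ioi m, ENNReal.ofReal (deriv g t ^ 2)) + ENNReal.ofReal (g m ^ 2)) := by
  by_cases htop : ∫⁻ t in Ioi m, ENNReal.ofReal (deriv g t ^ 2) = ∞
  · rw [htop, top_add, ENNReal.mul_top]
    · exact le_top
    · rw [Ne, ENNReal.ofReal_eq_zero, not_le]; positivity
  have hI : IntegrableOn (fun s => deriv g s ^ 2) (Ioi m) :=
    (lintegral_ofReal_ne_top_iff_integrable
      ((measurable_deriv g).pow_const 2).aestronglyMeasurable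
      (Eventually.of_forall fun s => sq_nonneg _)).1 htop
  rw [← ofReal_integral_eq_lintegral_ofReal hI (Eventually.of_forall fun s => sq_nonneg _)]
  have hA0 : 0 ≤ ∫ s in Ioi m, deriv g s ^ 2 := integral_nonneg fun s => sq_nonneg _
  have hb := fun t (ht : m < t) => ray_sq_bound ht (hg.mono Icc_subset_Ici_self)
    (fun s hs => hd s hs.1) hI
  set A := ∫ s in Ioi m, deriv g s ^ 2 with hA
  rw [← ENNReal.ofReal_add hA0 (sq_nonneg _), ← ENNReal.ofReal_mul (by positivity)]
  set K := 2 * (1 + 2 / α) * (A + g m ^ 2) * Real.exp (-(α/2) * m) with hK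
  have hneg : -(α/2) < 0 := by linarith
  have hint : IntegrableOn (fun t => K * Real.exp (-(α/2) * t)) (Ioi m) :=
    (integrableOn_exp_mul_Ioi hneg m).const_mul K
  have hK0 : 0 ≤ K := by positivity
  calc _ ≤ ∫⁻ t in Ioi m, ENNReal.ofReal (K * Real.exp (-(α/2) * t)) := by
        apply setLIntegral_mono' measurableSet_Ioi
        intro t ht
        apply ENNReal.ofReal_le_ofReal
        have ht' : 0 < t - m := sub_pos.2 ht
        have e0 : Real.exp (-α * t) = Real.exp (-(α/2)*m) * Real.exp (-(α/2)*t)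
            * Real.exp (-((α/2) * (t-m))) := by
          rw [← Real.exp_add, ← Real.exp_add]; congr 1; ring
        have e1 : (α/2) * (t - m) ≤ Real.exp ((α/2) * (t-m)) := by
          linarith [Real.add_one_le_exp ((α/2) * (t-m))]
        have e2 : 1 ≤ Real.exp ((α/2) * (t-m)) := Real.one_le_exp (by positivity)
        have e3 : t - m ≤ 2/α * Real.exp ((α/2) * (t-m)) := by
          have : t - m = 2/α * ((α/2) * (t-m)) := by field_simp
          rw [this]
          conv_rhs => rw [← this]
          gcongr
        have e4 : g t ^ 2 ≤ 2 * (1 + 2/α) * (A + g m ^2) * Real.exp ((α/2) * (t-m)) := by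
          set X := Real.exp ((α/2) * (t-m))
          have f1 : g m ^ 2 ≤ g m ^ 2 * X := le_mul_of_one_le_right (sq_nonneg _) e2
          have f2 : (t-m) * A ≤ 2/α * X * A := mul_le_mul_of_nonneg_right e3 hA0
          have f3 : 0 ≤ A * X := by positivity
          have f4 : 0 ≤ 2 / α * g m ^ 2 * X := by positivity
          nlinarith [hb t ht]
        calc _ ≤ Real.exp (-α * t) * (2 * (1 + 2/α) * (A + g m ^2) * Real.exp ((α/2) * (t-m))) := by
              gcongr
          _ = K * Real.exp (-(α/2) * t) *
                (Real.exp (-((α/2) * (t-m))) * Real.exp ((α/2) * (t-m))) := by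
              rw [e0, hK]; ring
          _ = _ := by rw [← Real.exp_add]; simp
    _ = ENNReal.ofReal (∫ t in Ioi m, K * Real.exp (-(α/2) * t)) := by
        rw [ofReal_integral_eq_lintegral_ofReal hint]
        exact Eventually.of_forall fun t => by positivity
    _ ≤ _ := by
        apply ENNReal.ofReal_le_ofReal
        rw [integral_const_mul, integral_exp_mul_Ioi hneg]
        have : Real.exp (-α * m) = Real.exp (-(α/2)*m) * Real.exp (-(α/2)*m) := by
          rw [← Real.exp_add]; congr 1; ring
        rw [this, hK]
        apply le_of_eq
        field_simp
        ring

lemma sob1 {g : ℝ → ℝ} (hg : ContDiff ℝ 1 g) (a : ℝ) :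
    ‖g a‖ₑ ≤ ∫⁻ s in Ioc a (a+1), (‖g s‖ₑ + ‖deriv g s‖ₑ) := by
  have hc := hg.continuous_deriv le_rfl
  have hd := hg.differentiable one_ne_zero
  have h1 : ∀ s ∈ Ioc a (a+1), ‖g a‖ₑ ≤ ‖g s‖ₑ + ∫⁻ r in Ioc a (a+1), ‖deriv g r‖ₑ := by
    intro s hs
    have hft : ∫ r in a..s, deriv g r = g s - g a :=
      intervalIntegral.integral_deriv_eq_sub (fun x _ => hd x) (hc.intervalIntegrable _ _)
    rw [intervalIntegral.integral_of_le hs.1.le] at hft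
    have : g a = g s - ∫ r in Ioc a s, deriv g r := by rw [hft]; ring
    calc ‖g a‖ₑ ≤ ‖g s‖ₑ + ‖∫ r in Ioc a s, deriv g r‖ₑ := by
          conv_lhs => rw [this]
          exact enorm_sub_le
      _ ≤ _ := by
          gcongr
          refine (enorm_integral_le_lintegral_enorm _).trans ?_
          exact lintegral_mono_set (Ioc_subset_Ioc_right hs.2)
  have h2 := setLIntegral_mono' (μ := volume) measurableSet_Ioc h1
  rw [lintegral_add_right _ measurable_const] at h2
  simp at h2
  rwa [lintegral_add_right _ hc.measurable.enorm]

lemma e2_lintegral_ge (F : E2 → ℝ≥0∞) :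
    ∫⁻ x, F x = ∫⁻ p : ℝ × ℝ, F (WithLp.toLp 2 ![p.1, p.2]) := by
  have h := (PiLp.volume_preserving_toLp (Fin 2)).comp (volume_preserving_finTwoArrow ℝ).symm
  have := h.lintegral_comp_emb ((MeasurableEquiv.finTwoArrow (α := ℝ)).symm.trans
    (MeasurableEquiv.toLp 2 (Fin 2 → ℝ))).measurableEmbedding F
  rw [← this]
  rfl

/-- graph coordinates -/
def phi (p : E2 × ℝ) : E3 := WithLp.toLp 2 ![p.2, p.1 0, p.1 1]

lemma e3_lintegral (F : E3 → ℝ≥0∞) :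
    ∫⁻ x, F x = ∫⁻ p : E2 × ℝ, F (phi p) := by
  have h1 := (volume_preserving_piFinSuccAbove (fun _ : Fin 3 => ℝ) 0).symm
  have h2 := (PiLp.volume_preserving_toLp (Fin 3)).comp h1
  have h3 : MeasurePreserving (Prod.map id (WithLp.ofLp) : ℝ × E2 → ℝ × (Fin 2 → ℝ)) volume volume :=
    (MeasurePreserving.id volume).prod (PiLp.volume_preserving_ofLp (Fin 2))
  have h4 : MeasurePreserving (Prod.swap : E2 × ℝ → ℝ × E2) volume volume := Measure.measurePreserving_swap
  have h := (h2.comp h3).comp h4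
  have := h.lintegral_comp_emb ((MeasurableEquiv.prodComm.trans
    (((MeasurableEquiv.refl ℝ).prodCongr (MeasurableEquiv.toLp 2 (Fin 2 → ℝ)).symm).trans
    ((MeasurableEquiv.piFinSuccAbove (fun _ : Fin 3 => ℝ) 0).symm.trans
    (MeasurableEquiv.toLp 2 (Fin 3 → ℝ))))).measurableEmbedding) F
  rw [← this]
  congr 1; ext p; congr 1; ext i
  fin_cases i <;> rfl

lemma sob_bdd (M : E2 → ℝ) (hM : ContDiff ℝ (⊤ : ℕ∞) M)
    (hMint : ∀ j ≤ 9, Integrable fun x' : E2 => ‖iteratedFDeriv ℝ j M x'‖ ^ 2) :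
    ∃ B : ℝ, ∀ x, |M x| ≤ B := by
  set N : ℕ → E2 → ℝ≥0∞ := fun j x => ENNReal.ofReal (‖iteratedFDeriv ℝ j M x‖ ^ 2) with hN
  have hNm : ∀ j, Measurable (N j) := fun j =>
    (((hM.continuous_iteratedFDeriv (m := j) (by exact_mod_cast le_top)).norm.pow 2).measurable).ennreal_ofReal
  have hNfin : ∀ j ≤ 9, ∫⁻ x, N j x ≠ ∞ := fun j hj => (hMint j hj).lintegral_lt_top.ne
  set e0 : E2 := WithLp.toLp 2 ![1, 0] with he0
  set e1 : E2 := WithLp.toLp 2 ![0, 1] with he1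
  have ne0 : ‖e0‖ = 1 := by simp [he0, EuclideanSpace.norm_eq]
  have ne1 : ‖e1‖ = 1 := by simp [he1, EuclideanSpace.norm_eq]
  set u : ℝ → ℝ → E2 := fun s t => WithLp.toLp 2 ![s, t] with hu
  have hus : ∀ s t, u s t = s • e0 + t • e1 := by
    intro s t; ext i; fin_cases i <;> simp [hu, he0, he1]
  have hd0 : ∀ s t, HasDerivAt (fun s => u s t) e0 s := by
    intro s t
    simp_rw [hus]
    simpa using ((hasDerivAt_id s).smul_const e0).add_const (t • e1)
  have hd1 : ∀ s t, HasDerivAt (fun t => u s t) e1 t := by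
    intro s t
    simp_rw [hus]
    simpa using ((hasDerivAt_id t).smul_const e1).const_add (s • e0)
  have hu0 : ∀ t, ContDiff ℝ 1 (fun s => u s t) := by
    intro t; simp_rw [hus]; fun_prop
  have hu1 : ∀ s, ContDiff ℝ 1 (fun t => u s t) := by
    intro s; simp_rw [hus]; fun_prop
  set P : E2 → ℝ := fun x => fderiv ℝ M x e0 with hP
  have hM1 : ContDiff ℝ 1 M := hM.of_le (by exact_mod_cast le_top)
  have hdM : ContDiff ℝ 1 (fderiv ℝ M) := hM.fderiv_right (by norm_cast)
  have hP1 : ContDiff ℝ 1 P := hdM.clm_apply contDiff_const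
  have n1 : ∀ x, ‖fderiv ℝ M x‖ = ‖iteratedFDeriv ℝ 1 M x‖ := fun x =>
    (norm_iteratedFDeriv_one M).symm
  have n2 : ∀ x, ‖fderiv ℝ (fderiv ℝ M) x‖ = ‖iteratedFDeriv ℝ 2 M x‖ := fun x => by
    rw [← norm_iteratedFDeriv_one, norm_iteratedFDeriv_fderiv]
  have gen : ∀ (r : ℝ) (j : ℕ) (x : E2), |r| ≤ ‖iteratedFDeriv ℝ j M x‖ → ‖r‖ₑ ≤ 1 + N j x := by
    intro r j x h
    rw [Real.enorm_eq_ofReal_abs, hN]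
    rw [← ENNReal.ofReal_one, ← ENNReal.ofReal_add zero_le_one (sq_nonneg _)]
    apply ENNReal.ofReal_le_ofReal
    nlinarith [sq_nonneg (‖iteratedFDeriv ℝ j M x‖ - 1), norm_nonneg (iteratedFDeriv ℝ j M x)]
  have b0 : ∀ x, ‖M x‖ₑ ≤ 1 + N 0 x := fun x => gen _ _ _ (by simp)
  have dle : ∀ x v, ‖v‖ = 1 → |fderiv ℝ M x v| ≤ ‖iteratedFDeriv ℝ 1 M x‖ := by
    intro x v hv
    have := (fderiv ℝ M x).le_opNorm v
    rwa [hv, mul_one, n1] at this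
  have b1 : ∀ x v, ‖v‖ = 1 → ‖fderiv ℝ M x v‖ₑ ≤ 1 + N 1 x := fun x v hv => gen _ _ _ (dle x v hv)
  have b2 : ∀ x, ‖fderiv ℝ P x e1‖ₑ ≤ 1 + N 2 x := by
    intro x
    apply gen
    have : fderiv ℝ P x e1 = fderiv ℝ (fderiv ℝ M) x e1 e0 := by
      have h := ((hdM.differentiable one_ne_zero x).hasFDerivAt.clm_apply (hasFDerivAt_const e0 x))
      rw [hP, h.fderiv]; simp
    rw [this]
    have := (fderiv ℝ (fderiv ℝ M) x).le_opNorm₂ e1 e0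
    rwa [ne0, ne1, mul_one, mul_one, n2] at this
  set G : E2 → ℝ≥0∞ := fun x => (N 0 x + N 1 x) + (N 1 x + N 2 x) with hG
  have hGm : Measurable G := ((hNm 0).add (hNm 1)).add ((hNm 1).add (hNm 2))
  have hGfin : ∫⁻ x, G x ≠ ∞ := by
    have e : ∫⁻ x, G x = ((∫⁻ x, N 0 x) + ∫⁻ x, N 1 x) + ((∫⁻ x, N 1 x) + ∫⁻ x, N 2 x) := by
      rw [← lintegral_add_left (hNm 0), ← lintegral_add_left (hNm 1)]
      exact lintegral_add_left ((hNm 0).add (hNm 1)) _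
    rw [e]
    simp [hNfin]
  have main : ∀ a b, ‖M (u a b)‖ₑ ≤ 4 + ∫⁻ x, G x := by
    intro a b
    have dM : ∀ s t v (c : ℝ → E2) r, HasDerivAt c v r → c r = u s t → 
        ∀ Q : E2 → ℝ, ContDiff ℝ 1 Q → deriv (fun r => Q (c r)) r = fderiv ℝ Q (u s t) v := by
      intro s t v c r hc hcr Q hQ
      have := ((hQ.differentiable one_ne_zero (c r)).hasFDerivAt.comp_hasDerivAt r hc).deriv
      rw [hcr] at this
      exact this
    have s1 : ‖M (u a b)‖ₑ ≤ ∫⁻ s in Ioc a (a+1), (‖M (u s b)‖ₑ + ‖P (u s b)‖ₑ) := by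
      refine (sob1 (hM1.comp (hu0 b)) a).trans (le_of_eq ?_)
      congr 1; ext s
      congr 2
      exact dM s b e0 _ s (hd0 s b) rfl M hM1
    have s2 : ∀ (Q : E2 → ℝ) (hQ : ContDiff ℝ 1 Q) s, ‖Q (u s b)‖ₑ ≤
        ∫⁻ t in Ioc b (b+1), (‖Q (u s t)‖ₑ + ‖fderiv ℝ Q (u s t) e1‖ₑ) := by
      intro Q hQ s
      refine (sob1 (hQ.comp (hu1 s)) b).trans (le_of_eq ?_)
      congr 1; ext t
      congr 2
      exact dM s t e1 _ t (hd1 s t) rfl Q hQ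
    have hGu : Measurable (fun p : ℝ × ℝ => G (u p.1 p.2)) := by
      apply hGm.comp
      simp_rw [hus]
      fun_prop
    have s3 : ∀ s, ‖M (u s b)‖ₑ + ‖P (u s b)‖ₑ ≤ 4 + ∫⁻ t in Ioc b (b+1), G (u s t) := by
      intro s
      have m0 : Measurable (fun t => ‖M (u s t)‖ₑ + ‖fderiv ℝ M (u s t) e1‖ₑ) := by
        have c1 : Continuous (fun t => M (u s t)) := hM1.continuous.comp (hu1 s).continuous
        have c2 : Continuous (fun t => fderiv ℝ M (u s t) e1) :=
          (hdM.continuous.comp (hu1 s).continuous).clm_apply continuous_const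
        exact c1.measurable.enorm.add c2.measurable.enorm
      calc _ ≤ _ := add_le_add (s2 M hM1 s) (s2 P hP1 s)
        _ = ∫⁻ t in Ioc b (b+1), ((‖M (u s t)‖ₑ + ‖fderiv ℝ M (u s t) e1‖ₑ) +
              (‖P (u s t)‖ₑ + ‖fderiv ℝ P (u s t) e1‖ₑ)) := (lintegral_add_left m0 _).symm
        _ ≤ ∫⁻ t in Ioc b (b+1), (4 + G (u s t)) := by
            apply lintegral_mono
            intro t
            calc _ ≤ _ := add_le_add (add_le_add (b0 (u s t)) (b1 (u s t) e1 ne1))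
                    (add_le_add (b1 (u s t) e0 ne0) (b2 (u s t)))
              _ = _ := by rw [hG]; ring
        _ = _ := by
            rw [lintegral_add_left measurable_const]; simp
    calc _ ≤ _ := s1
      _ ≤ ∫⁻ s in Ioc a (a+1), (4 + ∫⁻ t in Ioc b (b+1), G (u s t)) := lintegral_mono s3
      _ = 4 + ∫⁻ s in Ioc a (a+1), ∫⁻ t in Ioc b (b+1), G (u s t) := by
            rw [lintegral_add_left measurable_const]; simp
      _ ≤ 4 + ∫⁻ s, ∫⁻ t, G (u s t) := by
            gcongr
            · exact Measure.restrict_le_self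
            · exact Measure.restrict_le_self
      _ = _ := by
            rw [e2_lintegral_ge, Measure.volume_eq_prod, lintegral_prod _ hGu.aemeasurable]
  refine ⟨(4 + ∫⁻ x, G x).toReal, fun x => ?_⟩
  have h := main (x 0) (x 1)
  have hx : u (x 0) (x 1) = x := by ext i; fin_cases i <;> simp [hu]
  rw [hx] at h
  have := ENNReal.toReal_mono (by simp [hGfin]) h
  simpa using this

lemma phi_mem (M : E2 → ℝ) (x' : E2) (t : ℝ) : phi (x', t) ∈ Omg M ↔ M x' < t := by
  have h1 : proj2 (phi (x', t)) = x' := by ext i; fin_cases i <;> rfl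
  change M (proj2 (phi (x', t))) < t ↔ _
  rw [h1]

lemma phi_cont : Continuous phi := by
  unfold phi
  refine (PiLp.continuous_toLp 2 _).comp (continuous_pi fun i => ?_)
  fin_cases i <;> simp <;> fun_prop

lemma phi_deriv (x' : E2) (t : ℝ) :
    HasDerivAt (fun t => phi (x', t)) (EuclideanSpace.single (0 : Fin 3) (1 : ℝ)) t := by
  have h : ∀ t, phi (x', t) = t • EuclideanSpace.single (0 : Fin 3) (1 : ℝ) + phi (x', 0) := by
    intro t; ext i; fin_cases i <;> simp [phi]
  rw [funext h]
  simpa using ((hasDerivAt_id t).smul_const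
    (EuclideanSpace.single (0 : Fin 3) (1 : ℝ))).add_const (phi (x', 0))

lemma omg_open {M : E2 → ℝ} (hM : Continuous M) : IsOpen (Omg M) := by
  have hp : Continuous proj2 := by
    unfold proj2
    refine (PiLp.continuous_toLp 2 _).comp (continuous_pi fun i => ?_)
    fin_cases i <;> simp <;> fun_prop
  exact isOpen_lt (hM.comp hp) (by fun_prop)

lemma lint_slice (M : E2 → ℝ) (F : E3 → ℝ≥0∞) (x' : E2) :
    ∫⁻ t, (Omg M).indicator F (phi (x', t)) = ∫⁻ t in Ioi (M x'), F (phi (x', t)) := by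
  rw [← lintegral_indicator measurableSet_Ioi]
  congr 1; ext t
  by_cases h : M x' < t
  · rw [indicator_of_mem ((phi_mem M x' t).2 h), indicator_of_mem (mem_Ioi.2 h)]
  · rw [indicator_of_notMem (fun h' => h ((phi_mem M x' t).1 h')),
      indicator_of_notMem (fun h' => h (mem_Ioi.1 h'))]

theorem hardy_inequality (M : E2 → ℝ) (hM : ContDiff ℝ (⊤ : ℕ∞) M)
    (hMint : ∀ j ≤ 9, Integrable fun x' : E2 => ‖iteratedFDeriv ℝ j M x'‖ ^ 2)
    (α : ℝ) (hα : 0 < α) :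
    ∃ C : ℝ, 0 < C ∧
      ∀ f : E3 → ℝ, ContDiffOn ℝ 1 f (closure (Omg M)) →
        (∫⁻ x in Omg M, ENNReal.ofReal (Real.exp (-α * x 0) * f x ^ 2)) ≤
          ENNReal.ofReal C *
            ((∫⁻ x in Omg M, ENNReal.ofReal (‖fderiv ℝ f x‖ ^ 2)) +
              ∫⁻ x' : E2, ENNReal.ofReal (f (gph M x') ^ 2)) := by

  obtain ⟨B, hB⟩ := sob_bdd M hM hMint
  have hO := omg_open hM.continuous
  refine ⟨4 / α * (1 + 2 / α) * Real.exp (α * B), by positivity, fun f hf => ?_⟩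
  set C := 4 / α * (1 + 2 / α) * Real.exp (α * B) with hC
  have hDm : Measurable fun x : E3 => ENNReal.ofReal (‖fderiv ℝ f x‖ ^ 2) :=
    ((measurable_fderiv ℝ f).norm.pow_const 2).ennreal_ofReal
  have hind := (hDm.indicator hO.measurableSet).comp phi_cont.measurable
  have hclos : ∀ x' t, M x' ≤ t → phi (x', t) ∈ closure (Omg M) := by
    intro x' t ht
    have hc : Continuous fun t => phi (x', t) := phi_cont.comp (by fun_prop)
    have hm : MapsTo (fun t => phi (x', t)) (Ioi (M x')) (Omg M) := fun t ht =>
      (phi_mem M x' t).2 ht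
    refine hm.closure hc ?_
    rw [closure_Ioi]
    exact ht
  have hslice : ∀ x' : E2,
      ∫⁻ t in Ioi (M x'), ENNReal.ofReal (Real.exp (-α * (phi (x', t)) 0) * f (phi (x', t)) ^ 2) ≤
      ENNReal.ofReal C * ((∫⁻ t in Ioi (M x'), ENNReal.ofReal (‖fderiv ℝ f (phi (x', t))‖ ^ 2)) +
        ENNReal.ofReal (f (gph M x') ^ 2)) := by
    intro x'
    have hdf : ∀ t, M x' < t → HasDerivAt (fun t => f (phi (x', t)))
        (fderiv ℝ f (phi (x', t)) (EuclideanSpace.single (0 : Fin 3) (1 : ℝ))) t := by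
      intro t ht
      have hmem := (phi_mem M x' t).2 ht
      have hfd : DifferentiableAt ℝ f (phi (x', t)) :=
        ((hf.differentiableOn one_ne_zero).mono subset_closure).differentiableAt (hO.mem_nhds hmem)
      exact hfd.hasFDerivAt.comp_hasDerivAt t (phi_deriv x' t)
    have hcont : ContinuousOn (fun t => f (phi (x', t))) (Ici (M x')) :=
      hf.continuousOn.comp (phi_cont.comp (by fun_prop)).continuousOn (fun t ht => hclos x' t ht)
    refine (hardy_ray hα hcont (fun t ht => (hdf t ht).differentiableAt)).trans ?_
    have hCle : 4 / α * (1 + 2 / α) * Real.exp (-α * M x') ≤ C := by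
      rw [hC]
      have h1 : -α * M x' ≤ α * B := by nlinarith [neg_le_of_abs_le (hB x')]
      have h2 := Real.exp_le_exp.2 h1
      exact mul_le_mul_of_nonneg_left h2 (by positivity)
    refine mul_le_mul' (ENNReal.ofReal_le_ofReal hCle) (add_le_add ?_ le_rfl)
    apply setLIntegral_mono' measurableSet_Ioi
    intro t ht
    apply ENNReal.ofReal_le_ofReal
    rw [(hdf t ht).deriv, ← sq_abs]
    have := (fderiv ℝ f (phi (x', t))).le_opNorm (EuclideanSpace.single (0 : Fin 3) (1 : ℝ))
    rw [EuclideanSpace.norm_single, norm_one, mul_one, Real.norm_eq_abs] at this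
    gcongr
  rw [← lintegral_indicator hO.measurableSet, ← lintegral_indicator hO.measurableSet,
    e3_lintegral, e3_lintegral]
  refine (lintegral_prod_le _).trans ?_
  have hr : ∫⁻ p : E2 × ℝ, (Omg M).indicator (fun x => ENNReal.ofReal (‖fderiv ℝ f x‖ ^ 2)) (phi p)
      = ∫⁻ x' : E2, ∫⁻ t : ℝ,
        (Omg M).indicator (fun x => ENNReal.ofReal (‖fderiv ℝ f x‖ ^ 2)) (phi (x', t)) := by
    rw [Measure.volume_eq_prod]
    exact lintegral_prod _ hind.aemeasurable
  have hmeas : Measurable fun x' : E2 => ∫⁻ t : ℝ,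
      (Omg M).indicator (fun x => ENNReal.ofReal (‖fderiv ℝ f x‖ ^ 2)) (phi (x', t)) :=
    hind.lintegral_prod_right'
  rw [hr, ← lintegral_add_left hmeas,
    ← lintegral_const_mul' _ _ ENNReal.ofReal_ne_top]
  apply lintegral_mono
  intro x'
  simp only [lint_slice]
  exact hslice x'
end
end

section
/- Let M : ℝ² → ℝ be smooth with all partial derivatives up to order 9 square-integrable on ℝ², and let Ω := {x=(x₁,x₂,x₃)∈ℝ³ : x₁ > M(x₂,x₃)}. For every p with 2 ≤ p < 6 there exists a constant C > 0 (depending only on p and M) such that for every continuously differentiable f : closure(Ω) → ℝ with ∫_Ω |f|² dx < ∞ and ∫_Ω |∇f|² dx < ∞, one has (∫_Ω |f|^p dx)^{1/p} ≤ C ( ∫_Ω |f|² dx + ∫_Ω |∇f|² dx )^{1/2}. -/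
/- STATEMENT 3: Sobolev embedding L^p(Ω) ⊂ H¹(Ω) for 2 ≤ p < 6 on the perturbed
half-space Ω = {x ∈ ℝ³ : x₁ > M(x₂,x₃)}. -/

noncomputable section

open MeasureTheory Real Set Filter
open scoped ENNReal

lemma oneD {V : Type*} [NormedAddCommGroup V] [NormedSpace ℝ V] [CompleteSpace V]
    (h h' : ℝ → V)
    (hd : ∀ s ∈ Icc (0:ℝ) 1, HasDerivAt h (h' s) s) (hc : ContinuousOn h' (Icc 0 1)) :
    ‖h 0‖ₑ ≤ ∫⁻ s in Icc (0:ℝ) 1, (‖h s‖ₑ + ‖h' s‖ₑ) := by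
  have hcont : ContinuousOn h (Icc 0 1) := fun s hs => (hd s hs).continuousAt.continuousWithinAt
  have key : ∀ s ∈ Icc (0:ℝ) 1, ‖h 0‖ₑ ≤ ‖h s‖ₑ + ∫⁻ t in Icc (0:ℝ) 1, ‖h' t‖ₑ := by
    intro s hs
    have hsub : Icc 0 s ⊆ Icc (0:ℝ) 1 := Icc_subset_Icc_right hs.2
    have h1 : ∫ t in (0:ℝ)..s, h' t = h s - h 0 := by
      apply intervalIntegral.integral_eq_sub_of_hasDerivAt
      · intro t ht
        rw [uIcc_of_le hs.1] at ht
        exact hd t (hsub ht)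
      · apply ContinuousOn.intervalIntegrable
        rw [uIcc_of_le hs.1]
        exact hc.mono hsub
    have h2 : h 0 = h s - ∫ t in (0:ℝ)..s, h' t := by rw [h1]; abel
    rw [h2]
    refine (enorm_sub_le).trans ?_
    gcongr
    rw [intervalIntegral.integral_of_le hs.1]
    refine (enorm_integral_le_lintegral_enorm _).trans ?_
    exact lintegral_mono_set (Ioc_subset_Icc_self.trans hsub)
  have hm : AEMeasurable (fun s => ‖h s‖ₑ) (volume.restrict (Icc (0:ℝ) 1)) :=
    (hcont.aestronglyMeasurable_of_isCompact isCompact_Icc measurableSet_Icc).enorm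
  rw [lintegral_add_left' hm]
  calc ‖h 0‖ₑ = ∫⁻ s in Icc (0:ℝ) 1, ‖h 0‖ₑ := by simp
    _ ≤ ∫⁻ s in Icc (0:ℝ) 1, (‖h s‖ₑ + ∫⁻ t in Icc (0:ℝ) 1, ‖h' t‖ₑ) :=
      setLIntegral_mono' measurableSet_Icc key
    _ = _ := by rw [lintegral_add_left' hm]; simp

lemma grid (O : Set (Fin 3 → ℝ)) (hO : IsOpen O)
    (hinv : ∀ y ∈ O, ∀ i, ∀ s : ℝ, 0 ≤ s → y + s • (Pi.single i (1:ℝ) : Fin 3 → ℝ) ∈ O)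
    (f : (Fin 3 → ℝ) → ℝ) (hf : ContDiffOn ℝ 1 f O) (a : ℝ) (ha : 1 < a) :
    ∫⁻ y in O, ‖f y‖ₑ ^ (a * (3/2)) ≤
      (∫⁻ y in O, (‖f y‖ₑ ^ a + ENNReal.ofReal a * ‖f y‖ₑ ^ (a - 1) * ‖fderiv ℝ f y‖ₑ))
        ^ (3/2 : ℝ) := by
  classical
  have hDc : ContinuousOn (fderiv ℝ f) O := hf.continuousOn_fderiv_of_isOpen hO le_rfl
  have hfc : ContinuousOn f O := hf.continuousOn
  have hfd : ∀ y ∈ O, HasFDerivAt f (fderiv ℝ f y) y := fun y hy =>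
    ((hf.contDiffAt (hO.mem_nhds hy)).differentiableAt (by simp)).hasFDerivAt
  set G : (Fin 3 → ℝ) → ℝ≥0∞ :=
    fun y => ‖f y‖ₑ ^ a + ENNReal.ofReal a * ‖f y‖ₑ ^ (a - 1) * ‖fderiv ℝ f y‖ₑ with hG
  have hGm : Measurable (O.indicator G) := by
    have e : O.indicator G = fun y =>
        ‖O.indicator f y‖ₑ ^ a +
          ENNReal.ofReal a * ‖O.indicator f y‖ₑ ^ (a - 1) * ‖O.indicator (fderiv ℝ f) y‖ₑ := by
      funext y
      by_cases hy : y ∈ O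
      · simp [hy, hG]
      · have : (0:ℝ) < a := by linarith
        simp only [hy, not_false_eq_true, indicator_of_notMem, enorm_zero]
        rw [ENNReal.zero_rpow_of_pos this, ENNReal.zero_rpow_of_pos (by linarith)]; simp
    have m1 : Measurable (O.indicator f) := by
      rw [← piecewise_eq_indicator]
      exact hfc.measurable_piecewise continuousOn_const hO.measurableSet
    have m2 : Measurable (O.indicator (fderiv ℝ f)) :=
      (measurable_fderiv ℝ f).indicator hO.measurableSet
    rw [e]
    fun_prop
  have line : ∀ y ∈ O, ∀ i, ‖f y‖ₑ ^ a ≤ ∫⁻ t, O.indicator G (Function.update y i t) := by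
    intro y hy i
    set v : Fin 3 → ℝ := Pi.single i (1:ℝ) with hv
    have hvn : ‖v‖ = 1 := by rw [hv, Pi.norm_single]; simp
    set h : ℝ → ℝ := fun s => |f (y + s • v)| ^ a with hh
    set h' : ℝ → ℝ := fun s =>
      (a * |f (y + s • v)| ^ (a - 2) * f (y + s • v)) * (fderiv ℝ f (y + s • v) v) with hh'
    have hmem : ∀ s ∈ Icc (0:ℝ) 1, y + s • v ∈ O := fun s hs => hinv y hy i s hs.1
    have hl : Continuous fun s : ℝ => y + s • v := by fun_prop
    have hd : ∀ s ∈ Icc (0:ℝ) 1, HasDerivAt h (h' s) s := by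
      intro s hs
      have h1 : HasDerivAt (fun s : ℝ => y + s • v) v s := by
        simpa using ((hasDerivAt_id s).smul_const v).const_add y
      have h2 := (hfd _ (hmem s hs)).comp_hasDerivAt s h1
      exact (hasDerivAt_abs_rpow _ ha).comp s h2
    have hc : ContinuousOn h' (Icc 0 1) := by
      have c0 : Continuous fun x : ℝ => a * |x| ^ (a - 2) * x := by
        have := (contDiff_norm_rpow (E := ℝ) ha).continuous_deriv le_rfl
        refine this.congr fun x => ?_
        exact (hasDerivAt_abs_rpow x ha).deriv
      have c1 : ContinuousOn (fun s : ℝ => f (y + s • v)) (Icc 0 1) :=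
        hfc.comp hl.continuousOn hmem
      have c2 : ContinuousOn (fun s : ℝ => fderiv ℝ f (y + s • v)) (Icc 0 1) :=
        hDc.comp hl.continuousOn hmem
      exact (c0.comp_continuousOn c1).mul (c2.clm_apply continuousOn_const)
    have h1 := oneD h h' hd hc
    have e0 : ‖h 0‖ₑ = ‖f y‖ₑ ^ a := by
      simp only [hh, zero_smul, add_zero]
      rw [Real.enorm_rpow_of_nonneg (abs_nonneg _) (by linarith), Real.enorm_abs]
    rw [e0] at h1
    refine h1.trans ?_
    have h2 : ∫⁻ s in Icc (0:ℝ) 1, (‖h s‖ₑ + ‖h' s‖ₑ) ≤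
        ∫⁻ s in Icc (0:ℝ) 1, O.indicator G (y + s • v) := by
      refine setLIntegral_mono' measurableSet_Icc fun s hs => ?_
      rw [indicator_of_mem (hmem s hs)]
      simp only [hG]
      gcongr ?_ + ?_
      · simp only [hh]
        rw [Real.enorm_rpow_of_nonneg (abs_nonneg _) (by linarith), Real.enorm_abs]
      · simp only [hh']
        rw [enorm_mul]
        gcongr ?_ * ?_
        · generalize f (y + s • v) = z
          apply le_of_eq
          rw [enorm_mul, enorm_mul, Real.enorm_of_nonneg (by linarith : 0 ≤ a), mul_assoc]
          congr 1
          rw [← enorm_mul, ← Real.enorm_abs z, ← Real.enorm_rpow_of_nonneg (abs_nonneg _) (by linarith)]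
          rw [← Real.enorm_abs, abs_mul, abs_of_nonneg (Real.rpow_nonneg (abs_nonneg z) _)]
          congr 1
          rcases eq_or_ne z 0 with rfl | hz
          · simp [Real.zero_rpow (by linarith : a - 1 ≠ 0)]
          · have := Real.rpow_add_one (abs_ne_zero.2 hz) (a - 2)
            rw [← this]; congr 1; ring
        · refine (ContinuousLinearMap.le_opENorm _ _).trans ?_
          have : ‖v‖ₑ = 1 := by rw [← ofReal_norm, hvn]; simp
          rw [this, mul_one]
    refine h2.trans ((setLIntegral_le_lintegral _ _).trans ?_)
    apply le_of_eq
    rw [← lintegral_add_right_eq_self (fun t => O.indicator G (Function.update y i t)) (y i)]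
    congr 1
    funext s
    congr 1
    funext j
    by_cases hj : j = i
    · subst hj; simp [hv, add_comm]
    · simp [hv, hj]
  have hgl := lintegral_prod_lintegral_pow_le (ι := Fin 3) (fun _ => (volume : Measure ℝ))
    (p := 3/2) (by rw [Real.holderConjugate_iff]; norm_num) hGm
  rw [← volume_pi, lintegral_indicator hO.measurableSet] at hgl
  refine le_trans ?_ hgl
  rw [← lintegral_indicator hO.measurableSet]
  refine lintegral_mono fun y => ?_
  by_cases hy : y ∈ O
  · rw [indicator_of_mem hy]
    calc ‖f y‖ₑ ^ (a * (3/2)) = ∏ i : Fin 3, (‖f y‖ₑ ^ a) ^ ((1:ℝ) / (Fintype.card (Fin 3) - 1 : ℝ)) := by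
          rw [Finset.prod_const, ENNReal.rpow_mul, ← ENNReal.rpow_natCast]
          generalize ‖f y‖ₑ ^ a = z
          rw [← ENNReal.rpow_mul]
          congr 1
          rw [Finset.card_univ, Fintype.card_fin]
          norm_num
      _ ≤ _ := by
          apply Finset.prod_le_prod' 
          intro i _
          apply ENNReal.rpow_le_rpow (line y hy i)
          norm_num
  · rw [indicator_of_notMem hy]; exact zero_le

def SobN (O : Set (Fin 3 → ℝ)) (f : (Fin 3 → ℝ) → ℝ) : ℝ≥0∞ :=
  (∫⁻ y in O, ‖f y‖ₑ ^ (2:ℝ)) + ∫⁻ y in O, ‖fderiv ℝ f y‖ₑ ^ (2:ℝ)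

def SobP (O : Set (Fin 3 → ℝ)) (p : ℝ) : Prop :=
  ∃ C : ℝ≥0∞, C ≠ ∞ ∧ ∀ f : (Fin 3 → ℝ) → ℝ, ContDiffOn ℝ 1 f O →
    ∫⁻ y in O, ‖f y‖ₑ ^ p ≤ C * SobN O f ^ (p / 2)

lemma sobP_two (O : Set (Fin 3 → ℝ)) : SobP O 2 := by
  refine ⟨1, by simp, fun f _ => ?_⟩
  simp [SobN]

lemma sobP_interp (O : Set (Fin 3 → ℝ)) (hO : IsOpen O) (p q : ℝ) (hp : 2 ≤ p) (hpq : p < q)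
    (hq : SobP O q) : SobP O p := by
  obtain ⟨C, hC, h⟩ := hq
  set θ : ℝ := (p - 2) / (q - 2) with hθ
  have hq2 : 0 < q - 2 := by linarith
  have hθ0 : 0 ≤ θ := div_nonneg (by linarith) hq2.le
  have hθ1 : θ ≤ 1 := by rw [hθ, div_le_one hq2]; linarith
  have hθe : 2 * (1 - θ) + q * θ = p := by rw [hθ]; field_simp; ring
  refine ⟨C ^ θ, ENNReal.rpow_ne_top_of_nonneg hθ0 hC, fun f hf => ?_⟩
  have hm : AEMeasurable (fun y => ‖f y‖ₑ) (volume.restrict O) :=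
    (hf.continuousOn.aestronglyMeasurable hO.measurableSet).enorm
  calc ∫⁻ y in O, ‖f y‖ₑ ^ p
      = ∫⁻ y in O, (‖f y‖ₑ ^ (2:ℝ)) ^ (1 - θ) * (‖f y‖ₑ ^ q) ^ θ := by
        congr 1; funext y
        rw [← ENNReal.rpow_mul, ← ENNReal.rpow_mul, ← ENNReal.rpow_add_of_nonneg _ _ (by nlinarith)
          (by nlinarith), hθe]
    _ ≤ (∫⁻ y in O, ‖f y‖ₑ ^ (2:ℝ)) ^ (1 - θ) * (∫⁻ y in O, ‖f y‖ₑ ^ q) ^ θ :=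
        ENNReal.lintegral_mul_norm_pow_le (hm.pow_const _) (hm.pow_const _) (by linarith) hθ0
          (by ring)
    _ ≤ (SobN O f) ^ (1 - θ) * (C * SobN O f ^ (q / 2)) ^ θ := by
        have h0 : 0 ≤ 1 - θ := by linarith
        gcongr
        · exact le_self_add
        · exact h f hf
    _ = C ^ θ * SobN O f ^ (p / 2) := by
        rw [ENNReal.mul_rpow_of_nonneg _ _ hθ0, ← ENNReal.rpow_mul, mul_left_comm,
          ← ENNReal.rpow_add_of_nonneg _ _ (by linarith) (by apply mul_nonneg <;> linarith)]
        congr 2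
        linarith

lemma sobP_step (O : Set (Fin 3 → ℝ)) (hO : IsOpen O)
    (hinv : ∀ y ∈ O, ∀ i, ∀ s : ℝ, 0 ≤ s → y + s • (Pi.single i (1:ℝ) : Fin 3 → ℝ) ∈ O)
    (p : ℝ) (hp : 2 ≤ p) (h : SobP O p) : SobP O (3/2 + 3/4 * p) := by
  obtain ⟨C, hC, h⟩ := h
  refine ⟨(ENNReal.ofReal (1 + p/2) * (C ^ (1/2:ℝ) * 2 ^ (1/2:ℝ))) ^ (3/2:ℝ), by finiteness,
    fun f hf => ?_⟩
  have hg := grid O hO hinv f hf (1 + p/2) (by linarith)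
  have hm : AEMeasurable (fun y => ‖f y‖ₑ) (volume.restrict O) :=
    (hf.continuousOn.aestronglyMeasurable hO.measurableSet).enorm
  have hm' : AEMeasurable (fun y => ‖fderiv ℝ f y‖ₑ) (volume.restrict O) :=
    (measurable_fderiv ℝ f).enorm.aemeasurable
  have ha1 : 1 ≤ ENNReal.ofReal (1 + p/2) := by
    rw [ENNReal.one_le_ofReal]; linarith
  have hsq : ∫⁻ y in O, (‖f y‖ₑ + ‖fderiv ℝ f y‖ₑ) ^ (2:ℝ) ≤ 2 * SobN O f := by
    calc _ ≤ ∫⁻ y in O, 2 * (‖f y‖ₑ ^ (2:ℝ) + ‖fderiv ℝ f y‖ₑ ^ (2:ℝ)) := by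
          refine lintegral_mono fun y => ?_
          refine (ENNReal.rpow_add_le_mul_rpow_add_rpow _ _ (by norm_num)).trans (le_of_eq ?_)
          norm_num
      _ = _ := by
          rw [lintegral_const_mul' _ _ (by finiteness),
            lintegral_add_left' (hm.pow_const _)]
          rfl
  have hA : (∫⁻ y in O, (‖f y‖ₑ ^ (1 + p/2) +
      ENNReal.ofReal (1 + p/2) * ‖f y‖ₑ ^ (1 + p/2 - 1) * ‖fderiv ℝ f y‖ₑ)) ≤
      ENNReal.ofReal (1 + p/2) * (C ^ (1/2:ℝ) * 2 ^ (1/2:ℝ)) * SobN O f ^ (p / 4 + 1/2) := by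
    calc _ ≤ ∫⁻ y in O, ENNReal.ofReal (1 + p/2) *
          ((‖f y‖ₑ ^ p) ^ (1/2:ℝ) * ((‖f y‖ₑ + ‖fderiv ℝ f y‖ₑ) ^ (2:ℝ)) ^ (1/2:ℝ)) := by
          refine lintegral_mono fun y => ?_
          dsimp only
          rw [← ENNReal.rpow_mul, ← ENNReal.rpow_mul]
          have e1 : (2:ℝ) * (1/2) = 1 := by norm_num
          have e2 : p * (1/2) = p/2 := by ring
          have e3 : 1 + p/2 - 1 = p/2 := by ring
          rw [e1, e2, e3, ENNReal.rpow_one, mul_add, mul_add, mul_assoc]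
          gcongr
          calc ‖f y‖ₑ ^ (1 + p/2) = 1 * (‖f y‖ₑ ^ (p/2) * ‖f y‖ₑ) := by
                rw [ENNReal.rpow_add_of_nonneg _ _ (by norm_num) (by linarith), ENNReal.rpow_one,
                  one_mul, mul_comm]
            _ ≤ _ := by gcongr
      _ = ENNReal.ofReal (1 + p/2) * ∫⁻ y in O, 
          ((‖f y‖ₑ ^ p) ^ (1/2:ℝ) * ((‖f y‖ₑ + ‖fderiv ℝ f y‖ₑ) ^ (2:ℝ)) ^ (1/2:ℝ)) := by
          rw [lintegral_const_mul' _ _ (by finiteness)]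
      _ ≤ ENNReal.ofReal (1 + p/2) * ((∫⁻ y in O, ‖f y‖ₑ ^ p) ^ (1/2:ℝ) *
          (∫⁻ y in O, (‖f y‖ₑ + ‖fderiv ℝ f y‖ₑ) ^ (2:ℝ)) ^ (1/2:ℝ)) := by
          gcongr
          exact ENNReal.lintegral_mul_norm_pow_le (hm.pow_const _) ((hm.add hm').pow_const _)
            (by norm_num) (by norm_num) (by norm_num)
      _ ≤ ENNReal.ofReal (1 + p/2) * ((C * SobN O f ^ (p/2)) ^ (1/2:ℝ) *
          (2 * SobN O f) ^ (1/2:ℝ)) := by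
          gcongr
          exact h f hf
      _ = _ := by
          rw [ENNReal.mul_rpow_of_nonneg _ _ (by norm_num),
            ENNReal.mul_rpow_of_nonneg _ _ (by norm_num), ← ENNReal.rpow_mul,
            ENNReal.rpow_add_of_nonneg _ _ (by linarith) (by norm_num)]
          have e2 : p / 2 * (1/2) = p/4 := by ring
          rw [e2]; ring
  calc ∫⁻ y in O, ‖f y‖ₑ ^ (3/2 + 3/4 * p) = ∫⁻ y in O, ‖f y‖ₑ ^ ((1 + p/2) * (3/2)) := by
        congr 2; funext y; congr 1; ring
    _ ≤ _ := hg
    _ ≤ (ENNReal.ofReal (1 + p/2) * (C ^ (1/2:ℝ) * 2 ^ (1/2:ℝ)) *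
          SobN O f ^ (p / 4 + 1/2)) ^ (3/2:ℝ) := by gcongr
    _ = _ := by
        rw [ENNReal.mul_rpow_of_nonneg _ _ (by norm_num), ← ENNReal.rpow_mul]
        congr 2; ring

lemma sobP_all (O : Set (Fin 3 → ℝ)) (hO : IsOpen O)
    (hinv : ∀ y ∈ O, ∀ i, ∀ s : ℝ, 0 ≤ s → y + s • (Pi.single i (1:ℝ) : Fin 3 → ℝ) ∈ O)
    (p : ℝ) (hp : 2 ≤ p) (hp6 : p < 6) : SobP O p := by
  have hn : ∀ n : ℕ, SobP O (6 - 4 * (3/4:ℝ) ^ n) := by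
    intro n
    induction n with
    | zero => norm_num; exact sobP_two O
    | succ n ih =>
      have h1 : (3/4:ℝ) ^ n ≤ 1 := pow_le_one₀ (by norm_num) (by norm_num)
      have := sobP_step O hO hinv _ (by linarith) ih
      convert this using 1
      rw [pow_succ]; ring
  obtain ⟨n, hn'⟩ := exists_pow_lt_of_lt_one (show (0:ℝ) < (6 - p)/4 by linarith)
    (show (3/4:ℝ) < 1 by norm_num)
  exact sobP_interp O hO p _ hp (by linarith) (hn n)

lemma iter_line (M : E2 → ℝ) (hM : ContDiff ℝ (⊤ : ℕ∞) M) (j : ℕ) (x v : E2) (hv : ‖v‖ = 1) :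
    ‖iteratedFDeriv ℝ j M x‖ₑ ≤ ∫⁻ s in Icc (0:ℝ) 1,
      (‖iteratedFDeriv ℝ j M (x + s • v)‖ₑ + ‖iteratedFDeriv ℝ (j+1) M (x + s • v)‖ₑ) := by
  have hsm : ContDiff ℝ 1 (iteratedFDeriv ℝ j M) :=
    hM.iteratedFDeriv_right (m := 1) (by exact_mod_cast le_top)
  have h1 := oneD (fun s : ℝ => iteratedFDeriv ℝ j M (x + s • v))
    (fun s => fderiv ℝ (iteratedFDeriv ℝ j M) (x + s • v) v) ?_ ?_
  · simp only [zero_smul, add_zero] at h1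
    refine h1.trans (lintegral_mono fun s => ?_)
    dsimp only
    gcongr
    refine (ContinuousLinearMap.le_opENorm _ _).trans ?_
    have h2 : ‖v‖ₑ = 1 := by rw [← ofReal_norm, hv]; simp
    rw [h2, mul_one, ← ofReal_norm, ← ofReal_norm, norm_fderiv_iteratedFDeriv]
  · intro s _
    have h1 : HasDerivAt (fun s : ℝ => x + s • v) v s := by
      simpa using ((hasDerivAt_id s).smul_const v).const_add x
    exact ((hsm.differentiable (by simp)) _).hasFDerivAt.comp_hasDerivAt s h1
  · have := hsm.continuous_fderiv (by simp)
    have h3 : Continuous fun s : ℝ => x + s • v := by fun_prop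
    exact ((this.comp h3).clm_apply continuous_const).continuousOn

lemma cube_le (A : E2 → ℝ≥0∞) (hA : Measurable A) (x : E2) :
    ∫⁻ s : ℝ, ∫⁻ t : ℝ, A (x + s • (EuclideanSpace.single 0 (1:ℝ) : E2) +
      t • (EuclideanSpace.single 1 (1:ℝ) : E2)) = ∫⁻ z, A z := by
  rw [← lintegral_add_left_eq_self A x]
  have h1 : Measurable fun z => A (x + z) := by fun_prop
  rw [← (PiLp.volume_preserving_toLp (Fin 2)).lintegral_comp h1]
  rw [← ((volume_preserving_finTwoArrow ℝ).symm).lintegral_comp (by fun_prop)]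
  rw [Measure.volume_eq_prod, lintegral_prod _ (by fun_prop)]
  congr 1; funext s
  congr 1; funext t
  congr 1
  ext i
  fin_cases i <;> simp

lemma enorm_le_sq (x : ℝ≥0∞) : x ≤ 1 + x ^ 2 := by
  rcases le_total x 1 with h | h
  · exact h.trans le_self_add
  · calc x = x * 1 := by simp
      _ ≤ x * x := by gcongr
      _ = x ^ 2 := by ring
      _ ≤ _ := le_add_self

lemma M_lip (M : E2 → ℝ) (hM : ContDiff ℝ (⊤ : ℕ∞) M)
    (hMint : ∀ j ≤ 9, Integrable fun x' : E2 => ‖iteratedFDeriv ℝ j M x'‖ ^ 2) :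
    ∃ L : NNReal, LipschitzWith L M := by
  have hfin : ∀ j ≤ 9, ∫⁻ z, ‖iteratedFDeriv ℝ j M z‖ₑ ^ 2 ≠ ∞ := by
    intro j hj
    have := (hMint j hj).2
    rw [hasFiniteIntegral_iff_enorm] at this
    simp only [enorm_pow, enorm_norm] at this
    exact this.ne
  have hmeas : ∀ j, Measurable fun z => ‖iteratedFDeriv ℝ j M z‖ₑ := fun j =>
    (hM.continuous_iteratedFDeriv (m := j) (by exact_mod_cast le_top)).enorm.measurable
  set A : E2 → ℝ≥0∞ := fun z => ‖iteratedFDeriv ℝ 1 M z‖ₑ ^ 2 +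
      ‖iteratedFDeriv ℝ 2 M z‖ₑ ^ 2 + (‖iteratedFDeriv ℝ 2 M z‖ₑ ^ 2 +
      ‖iteratedFDeriv ℝ 3 M z‖ₑ ^ 2) with hAdef
  have m1 := hmeas 1
  have m2 := hmeas 2
  have m3 := hmeas 3
  have hA : Measurable A := by fun_prop
  have hAfin : ∫⁻ z, A z ≠ ∞ := by
    simp only [hAdef]
    rw [lintegral_add_left (by fun_prop), lintegral_add_left (by fun_prop),
      lintegral_add_left (by fun_prop)]
    have := hfin 1 (by norm_num)
    have := hfin 2 (by norm_num)
    have := hfin 3 (by norm_num)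
    finiteness
  have key : ∀ x, ‖iteratedFDeriv ℝ 1 M x‖ₑ ≤ 4 + ∫⁻ z, A z := by
    intro x
    set v : E2 := EuclideanSpace.single 0 (1:ℝ) with hv
    set w : E2 := EuclideanSpace.single 1 (1:ℝ) with hw
    have hv1 : ‖v‖ = 1 := by simp [hv]
    have hw1 : ‖w‖ = 1 := by simp [hw]
    have hl : ∀ y : E2, Continuous fun t : ℝ => y + t • w := fun y => by fun_prop
    calc ‖iteratedFDeriv ℝ 1 M x‖ₑ ≤ _ := iter_line M hM 1 x v hv1
      _ ≤ ∫⁻ s in Icc (0:ℝ) 1, (4 + ∫⁻ t : ℝ, A (x + s • v + t • w)) := by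
        refine lintegral_mono fun s => ?_
        have i1 := iter_line M hM 1 (x + s • v) w hw1
        have i2 := iter_line M hM 2 (x + s • v) w hw1
        refine (add_le_add i1 i2).trans ?_
        have hc := (hl (x + s • v)).measurable
        have hmm : Measurable fun t : ℝ => ‖iteratedFDeriv ℝ 1 M (x + s • v + t • w)‖ₑ +
            ‖iteratedFDeriv ℝ (1+1) M (x + s • v + t • w)‖ₑ :=
          ((hmeas 1).comp hc).add ((hmeas 2).comp hc)
        rw [← lintegral_add_left hmm]
        calc _ ≤ ∫⁻ t in Icc (0:ℝ) 1, (4 + A (x + s • v + t • w)) := by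
              refine lintegral_mono fun t => ?_
              simp only [hAdef]
              refine (add_le_add (add_le_add (enorm_le_sq _) (enorm_le_sq _))
                (add_le_add (enorm_le_sq _) (enorm_le_sq _))).trans (le_of_eq ?_)
              ring
          _ = 4 + ∫⁻ t in Icc (0:ℝ) 1, A (x + s • v + t • w) := by
              rw [lintegral_add_left (by fun_prop)]; simp
          _ ≤ _ := by gcongr; exact Measure.restrict_le_self
      _ = 4 + ∫⁻ s in Icc (0:ℝ) 1, ∫⁻ t : ℝ, A (x + s • v + t • w) := by
          rw [lintegral_add_left (by fun_prop)]; simp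
      _ ≤ 4 + ∫⁻ s : ℝ, ∫⁻ t : ℝ, A (x + s • v + t • w) := by gcongr; exact Measure.restrict_le_self
      _ = _ := by rw [cube_le A hA x]
  refine ⟨(4 + ∫⁻ z, A z).toNNReal, lipschitzWith_of_nnnorm_fderiv_le
    (hM.differentiable (by simp)) fun x => ?_⟩
  rw [← ENNReal.coe_le_coe, ENNReal.coe_toNNReal (by finiteness)]
  refine le_trans (le_of_eq ?_) (key x)
  rw [← enorm_eq_nnnorm, ← ofReal_norm, ← ofReal_norm, norm_iteratedFDeriv_one]

def Tmat (L : ℝ) : Matrix (Fin 3) (Fin 3) ℝ := !![1, L, L; 0, 1, 0; 0, 0, 1]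

def Tmap (L : ℝ) : (Fin 3 → ℝ) →L[ℝ] E3 :=
  ((EuclideanSpace.equiv (Fin 3) ℝ).symm : (Fin 3 → ℝ) →L[ℝ] E3).comp
    (LinearMap.toContinuousLinearMap (Matrix.toLin' (Tmat L)))

lemma Tmap_apply (L : ℝ) (y : Fin 3 → ℝ) :
    Tmap L y = WithLp.toLp 2 ![y 0 + L * y 1 + L * y 2, y 1, y 2] := by
  ext i
  fin_cases i <;> simp [Tmap, Tmat, Matrix.mulVec, dotProduct, Fin.sum_univ_three]

lemma Tmap_inj (L : ℝ) : Function.Injective (Tmap L) := by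
  intro y z h
  rw [Tmap_apply, Tmap_apply] at h
  have h0 := congrArg (fun x : E3 => x 0) h
  have h1 := congrArg (fun x : E3 => x 1) h
  have h2 := congrArg (fun x : E3 => x 2) h
  simp at h0 h1 h2
  ext i
  fin_cases i
  · simp; rw [h1, h2] at h0; linarith
  · exact h1
  · exact h2

lemma Tmap_mp (L : ℝ) : MeasurePreserving (Tmap L) volume volume := by
  have hdet : (Tmat L).det = 1 := by simp [Tmat, Matrix.det_fin_three]
  have h1 : MeasurePreserving (Matrix.toLin' (Tmat L)) volume volume := by
    refine ⟨(LinearMap.continuous_of_finiteDimensional _).measurable, ?_⟩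
    rw [Real.map_matrix_volume_pi_eq_smul_volume_pi (by rw [hdet]; norm_num), hdet]
    simp
  exact (PiLp.volume_preserving_toLp (Fin 3)).comp h1

lemma proj2_toLp (a b c : ℝ) : proj2 (WithLp.toLp 2 ![a, b, c]) = WithLp.toLp 2 ![b, c] := by
  simp [proj2]

lemma proj2_cont : Continuous proj2 := by
  unfold proj2
  refine (PiLp.continuous_toLp 2 (fun _ : Fin 2 => ℝ)).comp ?_
  refine continuous_pi fun i => ?_
  fin_cases i <;> simp <;> fun_prop

lemma inv_Omg (M : E2 → ℝ) (L : NNReal) (hL : LipschitzWith L M) :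
    ∀ y ∈ Tmap L ⁻¹' Omg M, ∀ i, ∀ s : ℝ, 0 ≤ s →
      y + s • (Pi.single i (1:ℝ) : Fin 3 → ℝ) ∈ Tmap L ⁻¹' Omg M := by
  intro y hy i s hs
  simp only [mem_preimage, Omg, mem_ofPred_eq, Tmap_apply, proj2_toLp] at hy ⊢
  have hd := hL.le_add_mul
  fin_cases i
  · simp at hy ⊢
    linarith
  · have h1 := hd (WithLp.toLp 2 ![y 1 + s, y 2]) (WithLp.toLp 2 ![y 1, y 2])
    have h2 : dist (WithLp.toLp 2 ![y 1 + s, y 2] : E2) (WithLp.toLp 2 ![y 1, y 2]) = s := by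
      rw [EuclideanSpace.dist_eq]; simp [Fin.sum_univ_two, Real.sqrt_sq hs, abs_of_nonneg hs]
    rw [h2] at h1
    simp at hy ⊢
    linarith
  · have h1 := hd (WithLp.toLp 2 ![y 1, y 2 + s]) (WithLp.toLp 2 ![y 1, y 2])
    have h2 : dist (WithLp.toLp 2 ![y 1, y 2 + s] : E2) (WithLp.toLp 2 ![y 1, y 2]) = s := by
      rw [EuclideanSpace.dist_eq]; simp [Fin.sum_univ_two, Real.sqrt_sq hs, abs_of_nonneg hs]
    rw [h2] at h1
    simp at hy ⊢
    linarith

theorem sobolev_Lp_embedding (M : E2 → ℝ) (hM : ContDiff ℝ (⊤ : ℕ∞) M)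
    (hMint : ∀ j ≤ 9, Integrable fun x' : E2 => ‖iteratedFDeriv ℝ j M x'‖ ^ 2)
    (p : ℝ) (hp2 : 2 ≤ p) (hp6 : p < 6) :
    ∃ C : ℝ, 0 < C ∧
      ∀ f : E3 → ℝ, ContDiffOn ℝ 1 f (closure (Omg M)) →
        IntegrableOn (fun x => f x ^ 2) (Omg M) →
        IntegrableOn (fun x => ‖fderiv ℝ f x‖ ^ 2) (Omg M) →
        (∫⁻ x in Omg M, ENNReal.ofReal (|f x| ^ p)) ^ (1 / p) ≤
          ENNReal.ofReal
            (C * ((∫ x in Omg M, f x ^ 2) + ∫ x in Omg M, ‖fderiv ℝ f x‖ ^ 2) ^ (1/2 : ℝ)) := by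
  obtain ⟨L, hL⟩ := M_lip M hM hMint
  set T := Tmap L with hT
  have hΩ : IsOpen (Omg M) := by
    have : Continuous fun x : E3 => x 0 := by fun_prop
    exact isOpen_lt (hM.continuous.comp proj2_cont) this
  set O := T ⁻¹' Omg M with hO'
  have hO : IsOpen O := hΩ.preimage T.continuous
  have hemb : MeasurableEmbedding T := T.continuous.measurableEmbedding (Tmap_inj L)
  have htr : ∀ g : E3 → ℝ≥0∞, ∫⁻ y in O, g (T y) = ∫⁻ x in Omg M, g x := fun g =>
    (Tmap_mp L).setLIntegral_comp_preimage_emb hemb g (Omg M)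
  obtain ⟨C, hC, hS⟩ := sobP_all O hO (inv_Omg M L hL) p hp2 hp6
  have hp0 : 0 < p := by linarith
  set K : ℝ≥0∞ := 1 + ‖T‖ₑ ^ (2:ℝ) with hK
  set D : ℝ≥0∞ := C ^ (1/p) * K ^ (1/2:ℝ) with hD
  have hDfin : D ≠ ∞ := by
    have h1 : C ^ (1/p) ≠ ∞ := ENNReal.rpow_ne_top_of_nonneg (by positivity) hC
    have h2 : K ≠ ∞ := by finiteness
    finiteness
  refine ⟨D.toReal + 1, by positivity, fun f hf hf2 hfd => ?_⟩
  have hfΩ : ContDiffOn ℝ 1 f (Omg M) := hf.mono subset_closure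
  have hg : ContDiffOn ℝ 1 (f ∘ T) O := hfΩ.comp T.contDiff.contDiffOn (fun _ h => h)
  set I := ∫ x in Omg M, f x ^ 2 with hI
  set J := ∫ x in Omg M, ‖fderiv ℝ f x‖ ^ 2 with hJ
  have hI0 : 0 ≤ I := integral_nonneg fun x => sq_nonneg _
  have hJ0 : 0 ≤ J := integral_nonneg fun x => sq_nonneg _
  have eI : ∫⁻ x in Omg M, ‖f x‖ₑ ^ (2:ℝ) = ENNReal.ofReal I := by
    rw [hI, ofReal_integral_eq_lintegral_ofReal hf2 (ae_of_all _ fun x => sq_nonneg _)]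
    congr 1; funext x
    rw [← sq_abs, ENNReal.ofReal_pow (abs_nonneg _), ← Real.norm_eq_abs, ofReal_norm]
    norm_num
  have eJ : ∫⁻ x in Omg M, ‖fderiv ℝ f x‖ₑ ^ (2:ℝ) = ENNReal.ofReal J := by
    rw [hJ, ofReal_integral_eq_lintegral_ofReal hfd (ae_of_all _ fun x => sq_nonneg _)]
    congr 1; funext x
    rw [ENNReal.ofReal_pow (norm_nonneg _), ofReal_norm]
    norm_num
  have hN : SobN O (f ∘ T) ≤ K * ENNReal.ofReal (I + J) := by
    have h1 : ∫⁻ y in O, ‖(f ∘ T) y‖ₑ ^ (2:ℝ) = ENNReal.ofReal I := by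
      rw [← eI]; exact htr fun x => ‖f x‖ₑ ^ (2:ℝ)
    have h2 : ∫⁻ y in O, ‖fderiv ℝ (f ∘ T) y‖ₑ ^ (2:ℝ) ≤ ‖T‖ₑ ^ (2:ℝ) * ENNReal.ofReal J := by
      calc _ ≤ ∫⁻ y in O, ‖T‖ₑ ^ (2:ℝ) * ‖fderiv ℝ f (T y)‖ₑ ^ (2:ℝ) := by
            refine setLIntegral_mono' hO.measurableSet fun y hy => ?_
            have hd : DifferentiableAt ℝ f (T y) :=
              (hfΩ.contDiffAt (hΩ.mem_nhds hy)).differentiableAt (by simp)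
            rw [fderiv_comp y hd T.differentiableAt, T.fderiv,
              ← ENNReal.mul_rpow_of_nonneg _ _ (by norm_num)]
            gcongr
            rw [mul_comm]
            exact ContinuousLinearMap.opENorm_comp_le _ _
        _ = ‖T‖ₑ ^ (2:ℝ) * ∫⁻ y in O, ‖fderiv ℝ f (T y)‖ₑ ^ (2:ℝ) :=
            lintegral_const_mul' _ _ (by finiteness)
        _ = _ := by rw [← eJ, htr fun x => ‖fderiv ℝ f x‖ₑ ^ (2:ℝ)]
    calc SobN O (f ∘ T) ≤ ENNReal.ofReal I + ‖T‖ₑ ^ (2:ℝ) * ENNReal.ofReal J := by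
          rw [SobN, h1]; gcongr
      _ ≤ K * ENNReal.ofReal I + K * ENNReal.ofReal J := by
          gcongr
          · calc ENNReal.ofReal I = 1 * ENNReal.ofReal I := by simp
              _ ≤ _ := by gcongr; exact le_self_add
          · exact le_add_self
      _ = _ := by rw [← mul_add, ENNReal.ofReal_add hI0 hJ0]
  have hmain := hS (f ∘ T) hg
  have e1 : ∫⁻ y in O, ‖(f ∘ T) y‖ₑ ^ p = ∫⁻ x in Omg M, ENNReal.ofReal (|f x| ^ p) := by
    refine (htr fun x => ‖f x‖ₑ ^ p).trans ?_
    congr 1; funext x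
    rw [← ENNReal.ofReal_rpow_of_nonneg (abs_nonneg _) hp0.le, ← Real.norm_eq_abs, ofReal_norm]
  rw [e1] at hmain
  have hip : 0 ≤ 1 / p := by positivity
  calc (∫⁻ x in Omg M, ENNReal.ofReal (|f x| ^ p)) ^ (1 / p)
      ≤ (C * (K * ENNReal.ofReal (I + J)) ^ (p / 2)) ^ (1 / p) := by
        apply ENNReal.rpow_le_rpow (hmain.trans ?_) hip
        gcongr
    _ = D * ENNReal.ofReal (I + J) ^ (1/2:ℝ) := by
        rw [ENNReal.mul_rpow_of_nonneg _ _ hip, ← ENNReal.rpow_mul]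
        have : p / 2 * (1 / p) = 1/2 := by field_simp
        rw [this, ENNReal.mul_rpow_of_nonneg _ _ (by norm_num), hD, mul_assoc]
    _ ≤ ENNReal.ofReal (D.toReal + 1) * ENNReal.ofReal (I + J) ^ (1/2:ℝ) := by
        gcongr
        rw [ENNReal.le_ofReal_iff_toReal_le hDfin (by positivity)]
        linarith
    _ = _ := by
        rw [ENNReal.ofReal_mul (by positivity),
          ENNReal.ofReal_rpow_of_nonneg (by linarith) (by norm_num)]
end
end
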